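/- Let T be a weakly primitive nonnegative tensor of order m ≥ 2 and dimension n ≥ 2, and let (λ*, x*) be its unique positive eigenpair normalized so that Σ_i (x*)_i = 1. Define the power iteration: given x^{(0)} with all components positive and Σ_i x^{(0)}_i = 1, set y^{(k+1)}_i := ((T (x^{(k)})^{m-1})_i)^{1/(m-1)} and x^{(k+1)} := y^{(k+1)} / (Σ_j y^{(k+1)}_j). Then the sequence x^{(k)} converges to x*, and there exist a constant θ ∈ (0,1) and a positive integer M such that d(x^{(k)}, x*) ≤ θ^{k/M} · d(x^{(0)}, x*) / θ for all k ≥ 1, where for vectors u, v with all components positive, d(u,v) := log( max_i (v_i/u_i) ) − log( min_i (v_i/u_i) ) is the Hilbert projective metric. -/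

import Mathlib

open Finset

/-- `(T x^{m-1})_i` for an order-`(k+1)` tensor encoded by its first index
and the `k` trailing indices (so for an order-`m` tensor, `k = m - 1`). -/
def tapp {ι : Type*} [Fintype ι] {k : ℕ} (T : ι → (Fin k → ι) → ℝ) (x : ι → ℝ) (i : ι) : ℝ :=
  ∑ β : Fin k → ι, T i β * ∏ l, x (β l)

/-- All entries of the tensor are nonnegative. -/
def TNonneg {ι : Type*} {k : ℕ} (T : ι → (Fin k → ι) → ℝ) : Prop :=
  ∀ i β, 0 ≤ T i β

/-- `T` is strictly nonnegative: nonnegative, and `T x^{m-1} > 0` whenever `x > 0`. -/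
def TStrictlyNonneg {ι : Type*} [Fintype ι] {k : ℕ} (T : ι → (Fin k → ι) → ℝ) : Prop :=
  TNonneg T ∧ ∀ x : ι → ℝ, (∀ i, 0 < x i) → ∀ i, 0 < tapp T x i

/-- Representation matrix `G(T)`: `G(T)_{ij}` is the sum of all `T_{i i₂…i_m}` with
`j ∈ {i₂,…,i_m}`. -/
def repMat {ι : Type*} [Fintype ι] [DecidableEq ι] {k : ℕ}
    (T : ι → (Fin k → ι) → ℝ) : Matrix ι ι ℝ :=
  fun i j => ∑ β : Fin k → ι, if ∃ l, β l = j then T i β else 0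

/-- Majorization matrix `M(T)`: `M(T)_{ij} = T_{i j j … j}`. -/
def majMat {ι : Type*} {k : ℕ} (T : ι → (Fin k → ι) → ℝ) : Matrix ι ι ℝ :=
  fun i j => T i (fun _ => j)

/-- A square matrix is reducible if some nonempty proper index subset `I` satisfies
`A i j = 0` for all `i ∈ I`, `j ∉ I`. -/
def MatReducible {ι : Type*} [Fintype ι] (A : Matrix ι ι ℝ) : Prop :=
  ∃ I : Finset ι, I.Nonempty ∧ I ≠ Finset.univ ∧ ∀ i ∈ I, ∀ j ∉ I, A i j = 0

def MatIrreducible {ι : Type*} [Fintype ι] (A : Matrix ι ι ℝ) : Prop :=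
  ¬ MatReducible A

/-- A square nonnegative matrix is primitive if some positive power is entrywise positive. -/
def MatPrimitive {ι : Type*} [Fintype ι] [DecidableEq ι] (A : Matrix ι ι ℝ) : Prop :=
  ∃ p : ℕ, 0 < p ∧ ∀ i j, 0 < (A ^ p) i j

/-- `lam ∈ ℂ` is an eigenvalue of `T`:
`(T x^{m-1})_i = lam * x_i^{m-1}` for some nonzero `x ∈ ℂⁿ`. -/
def TIsEig {ι : Type*} [Fintype ι] {k : ℕ} (T : ι → (Fin k → ι) → ℝ) (lam : ℂ) : Prop :=
  ∃ x : ι → ℂ, x ≠ 0 ∧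
    ∀ i, (∑ β : Fin k → ι, (T i β : ℂ) * ∏ l, x (β l)) = lam * x i ^ k

/-- Spectral radius: the supremum of moduli of eigenvalues. -/
noncomputable def specRad {ι : Type*} [Fintype ι] {k : ℕ}
    (T : ι → (Fin k → ι) → ℝ) : ℝ :=
  sSup {r : ℝ | ∃ lam : ℂ, TIsEig T lam ∧ r = ‖lam‖}

/-- Induced tensor `T_I` on a subset `I` of the index set. -/
def inducedT {ι : Type*} {k : ℕ} (T : ι → (Fin k → ι) → ℝ) (I : Finset ι) :
    {i // i ∈ I} → (Fin k → {i // i ∈ I}) → ℝ :=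
  fun i β => T i.val (fun l => (β l).val)

/-- The identity tensor: `E_{i₁…i_m} = 1` if all indices coincide, `0` otherwise. -/
def idT (ι : Type*) [DecidableEq ι] (k : ℕ) : ι → (Fin k → ι) → ℝ :=
  fun i β => if ∀ l, β l = i then 1 else 0

/-- A tensor is reducible if some nonempty proper index subset `I` satisfies
`T_{i₁ i₂ … i_m} = 0` for all `i₁ ∈ I` and `i₂, …, i_m ∉ I`. -/
def TReducible {ι : Type*} [Fintype ι] {k : ℕ} (T : ι → (Fin k → ι) → ℝ) : Prop :=
  ∃ I : Finset ι, I.Nonempty ∧ I ≠ Finset.univ ∧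
    ∀ i ∈ I, ∀ β : Fin k → ι, (∀ l, β l ∉ I) → T i β = 0

/-- The map `F_T(x)_i = ((T x^{m-1})_i)^{1/(m-1)}` (here `k = m - 1`). -/
noncomputable def FT {ι : Type*} [Fintype ι] {k : ℕ}
    (T : ι → (Fin k → ι) → ℝ) (x : ι → ℝ) : ι → ℝ :=
  fun i => (tapp T x i) ^ ((k : ℝ)⁻¹)

/-- A tensor is primitive if some iterate of `F_T` is entrywise positive on every
nonzero nonnegative vector. -/
def TPrimitive {ι : Type*} [Fintype ι] {k : ℕ} (T : ι → (Fin k → ι) → ℝ) : Prop :=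
  ∃ p : ℕ, 0 < p ∧ ∀ x : ι → ℝ, (∀ i, 0 ≤ x i) → x ≠ 0 → ∀ i, 0 < (FT T)^[p] x i

/-- `T` is weakly positive: all off-diagonal entries of `M(T)` are positive. -/
def TWeaklyPositive {ι : Type*} {k : ℕ} (T : ι → (Fin k → ι) → ℝ) : Prop :=
  ∀ i j, i ≠ j → 0 < T i (fun _ => j)

/-- `T` is essentially positive: `T x^{m-1} > 0` for every nonzero `x ≥ 0`. -/
def TEssentiallyPositive {ι : Type*} [Fintype ι] {k : ℕ} (T : ι → (Fin k → ι) → ℝ) : Prop :=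
  ∀ x : ι → ℝ, (∀ i, 0 ≤ x i) → x ≠ 0 → ∀ i, 0 < tapp T x i

/-- Hilbert's projective metric between two positive vectors:
`d(u,v) = log (max_i v_i/u_i) - log (min_i v_i/u_i)`. -/
noncomputable def hilbertD {n : ℕ} (hn : 0 < n) (u v : Fin n → ℝ) : ℝ :=
  Real.log ((Finset.univ : Finset (Fin n)).sup' ⟨⟨0, hn⟩, Finset.mem_univ _⟩
      (fun i => v i / u i)) -
  Real.log ((Finset.univ : Finset (Fin n)).inf' ⟨⟨0, hn⟩, Finset.mem_univ _⟩
      (fun i => v i / u i))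

/-!
In the coordinates `w = log (x / xs)` and up to an additive constant, a power step becomes
`f w i = (m - 1)⁻¹ * log (∑ β, S i β * exp (∑ l, w (β l)))`, where the entries `S i β` are
nonnegative and sum to one over `β`. Jensen's inequality gives `P *ᵥ w ≤ f w` for the
row-stochastic matrix `P` of the random walk that from `i` chooses `β` with probability `S i β` and
then moves to one of the indices in `β`, uniformly; also `f w ≤ max w`. Hence
`P ^ q *ᵥ w ≤ f^[q] w ≤ max w`. Weak primitivity makes some `P ^ q` entrywise at least `ε > 0`, so
`f^[q]` shrinks the oscillation `max w - min w`, which is the Hilbert distance from `x` to `xs`, by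
the factor `1 - ε`.
-/

open Function Matrix Set Topology

section Oscillation

variable {ι : Type*}

/-- The oscillation `max w - min w` of a vector, encoded as the diameter of its set of entries. -/
noncomputable def osc (w : ι → ℝ) : ℝ :=
  Metric.diam (range w)

lemma osc_nonneg (w : ι → ℝ) : 0 ≤ osc w :=
  Metric.diam_nonneg

lemma sub_le_osc [Finite ι] (w : ι → ℝ) (i j : ι) : w i - w j ≤ osc w :=
  (le_abs_self _).trans <|
    Metric.dist_le_diam_of_mem (finite_range w).isBounded (mem_range_self i) (mem_range_self j)

lemma osc_le [Nonempty ι] {w : ι → ℝ} {d : ℝ} (h : ∀ i j, w i - w j ≤ d) : osc w ≤ d := by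
  refine Metric.diam_le_of_forall_dist_le_of_nonempty (range_nonempty w) ?_
  rintro _ ⟨i, rfl⟩ _ ⟨j, rfl⟩
  exact abs_sub_le_iff.2 ⟨h i j, h j i⟩

lemma osc_add_const [Finite ι] (w : ι → ℝ) (c : ℝ) : osc (w + const ι c) = osc w := by
  rcases isEmpty_or_nonempty ι with _ | _
  · exact congrArg osc (Subsingleton.elim _ _)
  · refine le_antisymm (osc_le fun i j => ?_) (osc_le fun i j => ?_)
    · simpa using sub_le_osc w i j
    · simpa using sub_le_osc (w + const ι c) i j

end Oscillation

section HilbertMetric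

/-- The logarithmic coordinates `log (u / v)` of `u` relative to a reference vector `v`. -/
noncomputable def logRatio {ι : Type*} (u v : ι → ℝ) : ι → ℝ :=
  fun i => Real.log (u i / v i)

lemma mul_exp_logRatio {ι : Type*} {u v : ι → ℝ} {i : ι} (hu : 0 < u i) (hv : 0 < v i) :
    v i * Real.exp (logRatio u v i) = u i := by
  rw [logRatio, Real.exp_log (div_pos hu hv), mul_div_cancel₀ _ hv.ne']

lemma hilbertD_eq_osc_logRatio {n : ℕ} (hn : 0 < n) {u v : Fin n → ℝ}
    (hu : ∀ i, 0 < u i) (hv : ∀ i, 0 < v i) : hilbertD hn u v = osc (logRatio u v) := by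
  have : Nonempty (Fin n) := ⟨⟨0, hn⟩⟩
  have hlog : ∀ i, logRatio u v i = -Real.log (v i / u i) := fun i => by
    rw [logRatio, ← Real.log_inv, inv_div]
  have hpos : ∀ i, 0 < v i / u i := fun i => div_pos (hv i) (hu i)
  obtain ⟨a, -, ha⟩ := exists_mem_eq_sup' univ_nonempty fun i => v i / u i
  obtain ⟨b, -, hb⟩ := exists_mem_eq_inf' univ_nonempty fun i => v i / u i
  have hD : hilbertD hn u v = logRatio u v b - logRatio u v a := by
    rw [hilbertD, ha, hb, hlog, hlog]; ring
  have hmax : ∀ i, v i / u i ≤ v a / u a := fun i => ha ▸ le_sup' (fun i => v i / u i) (mem_univ i)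
  have hmin : ∀ i, v b / u b ≤ v i / u i := fun i => hb ▸ inf'_le (fun i => v i / u i) (mem_univ i)
  refine le_antisymm (hD ▸ sub_le_osc _ b a) (osc_le fun i j => ?_)
  rw [hD, hlog, hlog, hlog, hlog]
  linarith [Real.log_le_log (hpos j) (hmax j), Real.log_le_log (hpos b) (hmin i)]

variable {ι : Type*} [Fintype ι]

lemma abs_logRatio_le_osc {u v : ι → ℝ} (hu : ∀ i, 0 < u i) (hv : ∀ i, 0 < v i)
    (huv : ∑ i, u i = ∑ i, v i) (i : ι) : |logRatio u v i| ≤ osc (logRatio u v) := by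
  obtain ⟨a, -, ha⟩ := exists_le_of_sum_le ⟨i, mem_univ i⟩ huv.le
  obtain ⟨b, -, hb⟩ := exists_le_of_sum_le ⟨i, mem_univ i⟩ huv.ge
  have ha' : logRatio u v a ≤ 0 :=
    Real.log_nonpos (div_pos (hu a) (hv a)).le ((div_le_one (hv a)).2 ha)
  have hb' : 0 ≤ logRatio u v b := Real.log_nonneg ((one_le_div (hv b)).2 hb)
  refine abs_le.2 ⟨?_, ?_⟩
  · linarith [sub_le_osc (logRatio u v) b i]
  · linarith [sub_le_osc (logRatio u v) i a]

lemma tendsto_of_tendsto_osc_logRatio {α : Type*} {l : Filter α} {u : α → ι → ℝ} {v : ι → ℝ}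
    (hu : ∀ k i, 0 < u k i) (hv : ∀ i, 0 < v i) (hsum : ∀ k, ∑ i, u k i = ∑ i, v i)
    (hosc : Filter.Tendsto (fun k => osc (logRatio (u k) v)) l (𝓝 0)) :
    Filter.Tendsto u l (𝓝 v) := by
  refine tendsto_pi_nhds.2 fun i => ?_
  have hlog : Filter.Tendsto (fun k => logRatio (u k) v i) l (𝓝 0) :=
    squeeze_zero_norm (fun k => abs_logRatio_le_osc (hu k) hv (hsum k) i) hosc
  have hexp : Filter.Tendsto (fun k => v i * Real.exp (logRatio (u k) v i)) l (𝓝 (v i)) := by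
    simpa using ((Real.continuous_exp.tendsto 0).comp hlog).const_mul (v i)
  exact hexp.congr fun k => mul_exp_logRatio (hu k i) (hv i)

end HilbertMetric

section NonnegativeMatrix

variable {ι : Type*} [Fintype ι] [DecidableEq ι] {A B P : Matrix ι ι ℝ}

lemma MatPrimitive.of_support_subset (hA : ∀ i j, 0 ≤ A i j) (hB : ∀ i j, 0 ≤ B i j)
    (hAB : ∀ i j, 0 < A i j → 0 < B i j) (h : MatPrimitive A) : MatPrimitive B := by
  obtain ⟨p, hp, hpos⟩ := h
  suffices ∀ q i j, 0 < (A ^ q) i j → 0 < (B ^ q) i j from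
    ⟨p, hp, fun i j => this p i j (hpos i j)⟩
  intro q
  induction q with
  | zero => simp
  | succ q ih =>
    intro i j hij
    have hA' : ∀ l, 0 ≤ (A ^ q) i l := pow_apply_nonneg hA q i
    have hB' : ∀ l, 0 ≤ (B ^ q) i l := pow_apply_nonneg hB q i
    rw [pow_succ, mul_apply,
      sum_pos_iff_of_nonneg fun l _ => mul_nonneg (hA' l) (hA l j)] at hij
    obtain ⟨l, -, hl⟩ := hij
    rw [pow_succ, mul_apply]
    exact sum_pos' (fun l _ => mul_nonneg (hB' l) (hB l j)) ⟨l, mem_univ l,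
      mul_pos (ih i l (pos_of_mul_pos_left hl (hA l j)))
        (hAB l j (pos_of_mul_pos_right hl (hA' l)))⟩

lemma MatPrimitive.exists_pos_apply (hA : ∀ i j, 0 ≤ A i j) (h : MatPrimitive A) (i : ι) :
    ∃ j, 0 < A i j := by
  obtain ⟨p, hp, hpos⟩ := h
  obtain ⟨q, rfl⟩ := Nat.exists_eq_succ_of_ne_zero hp.ne'
  by_contra! hrow
  have hzero : ∀ l, A i l = 0 := fun l => le_antisymm (hrow l) (hA i l)
  simpa [pow_succ', mul_apply, hzero] using hpos i i

lemma MatPrimitive.exists_le_pow_apply (h : MatPrimitive A) :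
    ∃ p, 0 < p ∧ ∃ ε ∈ Ioo (0 : ℝ) 1, ∀ i j, ε ≤ (A ^ p) i j := by
  obtain ⟨p, hp, hpos⟩ := h
  refine ⟨p, hp, ?_⟩
  rcases isEmpty_or_nonempty ι with _ | _
  · exact ⟨1 / 2, by norm_num, isEmptyElim⟩
  · obtain ⟨z, hz⟩ := Finite.exists_min fun z : ι × ι => (A ^ p) z.1 z.2
    exact ⟨min ((A ^ p) z.1 z.2) (1 / 2),
      ⟨lt_min (hpos _ _) (by norm_num), (min_le_right _ _).trans_lt (by norm_num)⟩,
      fun i j => (min_le_left _ _).trans (hz (i, j))⟩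

omit [DecidableEq ι] in
lemma mulVec_mono_of_nonneg (hP : ∀ i j, 0 ≤ P i j) {v w : ι → ℝ} (h : v ≤ w) :
    P *ᵥ v ≤ P *ᵥ w :=
  fun i => sum_le_sum fun j _ => mul_le_mul_of_nonneg_left (h j) (hP i j)

lemma pow_mulVec_le_iterate (hP : ∀ i j, 0 ≤ P i j) {f : (ι → ℝ) → ι → ℝ}
    (hf : ∀ w, P *ᵥ w ≤ f w) (q : ℕ) (w : ι → ℝ) : (P ^ q) *ᵥ w ≤ f^[q] w := by
  induction q with
  | zero => simp
  | succ q ih =>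
    rw [pow_succ', ← mulVec_mulVec, iterate_succ_apply']
    exact (mulVec_mono_of_nonneg hP ih).trans (hf _)

lemma le_mulVec_of_mem_rowStochastic (hP : P ∈ rowStochastic ℝ ι) {w : ι → ℝ} {b d : ℝ} (a : ι)
    (hb : w a = b) (hd : ∀ l, b - w l ≤ d) (j : ι) : b - (1 - P j a) * d ≤ (P *ᵥ w) j := by
  have hsum : P j a + ∑ l ∈ univ.erase a, P j l = 1 := by
    rw [add_sum_erase _ _ (mem_univ a), sum_row_of_mem_rowStochastic hP]
  calc b - (1 - P j a) * d
      = P j a * w a + ∑ l ∈ univ.erase a, P j l * (b - d) := by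
        rw [← sum_mul, hb, eq_sub_of_add_eq' hsum]; ring
    _ ≤ P j a * w a + ∑ l ∈ univ.erase a, P j l * w l := by
        gcongr with l
        · exact nonneg_of_mem_rowStochastic hP
        · linarith [hd l]
    _ = (P *ᵥ w) j := add_sum_erase _ (fun l => P j l * w l) (mem_univ a)

/-- Doeblin's argument: every entry of `P *ᵥ w` gives weight at least `ε` to the maximum of `w`. -/
lemma osc_le_of_mulVec_le (hP : P ∈ rowStochastic ℝ ι) {ε : ℝ} (hε : ∀ i j, ε ≤ P i j)
    {v w : ι → ℝ} (hlow : P *ᵥ w ≤ v) (hup : ∀ b, w ≤ const ι b → v ≤ const ι b) :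
    osc v ≤ (1 - ε) * osc w := by
  rcases isEmpty_or_nonempty ι with _ | _
  · simp [osc, range_eq_empty]
  obtain ⟨a, ha⟩ := Finite.exists_max w
  refine osc_le fun i j => ?_
  have hi : v i ≤ w a := hup (w a) ha i
  have hj : w a - (1 - P j a) * osc w ≤ v j :=
    (le_mulVec_of_mem_rowStochastic hP a rfl (sub_le_osc w a) j).trans (hlow j)
  have hεP : (1 - P j a) * osc w ≤ (1 - ε) * osc w := by
    gcongr
    exacts [osc_nonneg w, hε j a]
  linarith

end NonnegativeMatrix

section Tensor

variable {ι : Type*} [Fintype ι] {r : ℕ} {T : ι → (Fin r → ι) → ℝ}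

lemma TNonneg.tapp_nonneg (hT : TNonneg T) {x : ι → ℝ} (hx : 0 ≤ x) (i : ι) : 0 ≤ tapp T x i :=
  sum_nonneg fun β _ => mul_nonneg (hT i β) (prod_nonneg fun _ _ => hx _)

lemma TNonneg.tapp_mono (hT : TNonneg T) {x y : ι → ℝ} (hx : 0 ≤ x) (hxy : x ≤ y) (i : ι) :
    tapp T x i ≤ tapp T y i :=
  sum_le_sum fun β _ => mul_le_mul_of_nonneg_left
    (prod_le_prod (fun _ _ => hx _) fun _ _ => hxy _) (hT i β)

lemma tapp_smul (T : ι → (Fin r → ι) → ℝ) (c : ℝ) (x : ι → ℝ) (i : ι) :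
    tapp T (c • x) i = c ^ r * tapp T x i := by
  simp only [tapp, Pi.smul_apply, smul_eq_mul, prod_mul_distrib, prod_const, card_univ,
    Fintype.card_fin, mul_sum, mul_left_comm]

lemma TStrictlyNonneg.FT_pos (hT : TStrictlyNonneg T) {x : ι → ℝ} (hx : ∀ i, 0 < x i) (i : ι) :
    0 < FT T x i :=
  Real.rpow_pos_of_pos (hT.2 x hx i) _

lemma TNonneg.strictlyNonneg (hT : TNonneg T) (hrow : ∀ i, ∃ β, 0 < T i β) :
    TStrictlyNonneg T := by
  refine ⟨hT, fun x hx i => ?_⟩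
  obtain ⟨β, hβ⟩ := hrow i
  exact sum_pos' (fun γ _ => mul_nonneg (hT i γ) (prod_nonneg fun _ _ => (hx _).le))
    ⟨β, mem_univ β, mul_pos hβ (prod_pos fun _ _ => hx _)⟩

lemma TStrictlyNonneg.eigenvalue_pos [Nonempty ι] (hT : TStrictlyNonneg T) {lam : ℝ} {v : ι → ℝ}
    (hv : ∀ i, 0 < v i) (heig : ∀ i, tapp T v i = lam * v i ^ r) : 0 < lam := by
  obtain ⟨i⟩ := ‹Nonempty ι›
  exact pos_of_mul_pos_left (heig i ▸ hT.2 v hv i) (pow_nonneg (hv i).le r)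

lemma FT_eq_smul_of_eigenpair (hr : r ≠ 0) {lam : ℝ} (hlam : 0 ≤ lam) {v : ι → ℝ} (hv : 0 ≤ v)
    (heig : ∀ i, tapp T v i = lam * v i ^ r) : FT T v = lam ^ (r : ℝ)⁻¹ • v := by
  funext i
  rw [FT, heig, Real.mul_rpow hlam (pow_nonneg (hv i) r), Real.pow_rpow_inv_natCast (hv i) hr,
    Pi.smul_apply, smul_eq_mul]

variable [DecidableEq ι]

lemma TNonneg.repMat_nonneg (hT : TNonneg T) (i j : ι) : 0 ≤ repMat T i j :=
  sum_nonneg fun β _ => by split_ifs <;> simp [hT i β]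

lemma TNonneg.repMat_pos_iff (hT : TNonneg T) {i j : ι} :
    0 < repMat T i j ↔ ∃ β, (∃ l, β l = j) ∧ 0 < T i β := by
  rw [repMat, sum_pos_iff_of_nonneg fun β _ => by split_ifs <;> simp [hT i β]]
  refine exists_congr fun β => ?_
  split_ifs with h <;> simp [h]

lemma TNonneg.strictlyNonneg_of_matPrimitive (hT : TNonneg T) (hprim : MatPrimitive (repMat T)) :
    TStrictlyNonneg T :=
  hT.strictlyNonneg fun i =>
    let ⟨_, hj⟩ := hprim.exists_pos_apply hT.repMat_nonneg i
    let ⟨β, _, hβ⟩ := hT.repMat_pos_iff.1 hj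
    ⟨β, hβ⟩

end Tensor

section StochasticTensor

variable {ι : Type*} [Fintype ι] {r : ℕ} {S : ι → (Fin r → ι) → ℝ}

/-- A tensor is stochastic if it is nonnegative and, for each first index, its entries sum to one;
equivalently, it is nonnegative and fixes the all-ones vector. -/
def TStochastic (S : ι → (Fin r → ι) → ℝ) : Prop :=
  TNonneg S ∧ ∀ i, ∑ β, S i β = 1

/-- The map `F_S` conjugated by the entrywise exponential. -/
noncomputable def logFT (S : ι → (Fin r → ι) → ℝ) (w : ι → ℝ) : ι → ℝ :=
  fun i => Real.log (FT S (fun j => Real.exp (w j)) i)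

/-- The transition matrix of the random walk that from `i` chooses a tuple `β` with probability
`S i β` and then moves to one of the `r` indices in `β`, chosen uniformly. -/
noncomputable def meanMat [DecidableEq ι] (S : ι → (Fin r → ι) → ℝ) : Matrix ι ι ℝ :=
  fun i j => (r : ℝ)⁻¹ * ∑ β, S i β * #{l | β l = j}

lemma TStochastic.strictlyNonneg (hS : TStochastic S) : TStrictlyNonneg S :=
  hS.1.strictlyNonneg fun i => by
    simpa using exists_lt_of_sum_lt (s := univ) (f := 0) (g := S i) (by simp [hS.2 i])

lemma TStochastic.tapp_const (hS : TStochastic S) (c : ℝ) (i : ι) :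
    tapp S (const ι c) i = c ^ r := by
  simp [tapp, ← sum_mul, hS.2 i]

lemma TStochastic.tapp_exp_pos (hS : TStochastic S) (w : ι → ℝ) (i : ι) :
    0 < tapp S (fun j => Real.exp (w j)) i :=
  hS.strictlyNonneg.2 _ (fun _ => Real.exp_pos _) i

lemma TStochastic.logFT_apply (hS : TStochastic S) (w : ι → ℝ) (i : ι) :
    logFT S w i = (r : ℝ)⁻¹ * Real.log (tapp S (fun j => Real.exp (w j)) i) :=
  Real.log_rpow (hS.tapp_exp_pos w i) _

lemma TStochastic.logFT_add_const (hS : TStochastic S) (hr : r ≠ 0) (w : ι → ℝ) (c : ℝ) :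
    logFT S (w + const ι c) = logFT S w + const ι c := by
  funext i
  have hexp : (fun j => Real.exp ((w + const ι c) j)) = Real.exp c • fun j => Real.exp (w j) := by
    funext j; simp [Real.exp_add, mul_comm]
  rw [hS.logFT_apply, hexp, tapp_smul, Real.log_mul (by positivity) (hS.tapp_exp_pos w i).ne',
    Real.log_pow, Real.log_exp, Pi.add_apply, const_apply, hS.logFT_apply]
  field_simp
  ring

lemma TStochastic.logFT_le_const (hS : TStochastic S) (hr : r ≠ 0) {w : ι → ℝ} {b : ℝ}
    (hw : w ≤ const ι b) : logFT S w ≤ const ι b := by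
  intro i
  have hle : tapp S (fun j => Real.exp (w j)) i ≤ Real.exp b ^ r := by
    rw [← hS.tapp_const]
    exact hS.1.tapp_mono (fun _ => (Real.exp_pos _).le) (fun j => Real.exp_le_exp.2 (hw j)) i
  calc logFT S w i
      = (r : ℝ)⁻¹ * Real.log (tapp S (fun j => Real.exp (w j)) i) := hS.logFT_apply w i
    _ ≤ (r : ℝ)⁻¹ * Real.log (Real.exp b ^ r) := by
        gcongr
        exact hS.tapp_exp_pos w i
    _ = b := by rw [Real.log_pow, Real.log_exp]; field_simp

variable [DecidableEq ι]

lemma meanMat_mulVec (S : ι → (Fin r → ι) → ℝ) (w : ι → ℝ) (i : ι) :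
    (meanMat S *ᵥ w) i = (r : ℝ)⁻¹ * ∑ β, S i β * ∑ l, w (β l) := by
  have hcount : ∀ β : Fin r → ι, ∑ l, w (β l) = ∑ j, #{l | β l = j} * w j := fun β => by
    simp [← sum_fiberwise' univ β w]
  simp only [mulVec, dotProduct, meanMat, hcount, mul_sum, sum_mul, mul_assoc]
  exact sum_comm

lemma TNonneg.meanMat_nonneg (hS : TNonneg S) (i j : ι) : 0 ≤ meanMat S i j :=
  mul_nonneg (by positivity) (sum_nonneg fun β _ => mul_nonneg (hS i β) (by positivity))

lemma TStochastic.meanMat_mem_rowStochastic (hS : TStochastic S) (hr : r ≠ 0) :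
    meanMat S ∈ rowStochastic ℝ ι :=
  mem_rowStochastic.2 ⟨hS.1.meanMat_nonneg, funext fun i => by
    simp [meanMat_mulVec, ← sum_mul, hS.2 i, hr]⟩

lemma TNonneg.meanMat_pos_of_repMat_pos (hS : TNonneg S) {i j : ι} (h : 0 < repMat S i j) :
    0 < meanMat S i j := by
  obtain ⟨β, ⟨l, hl⟩, hβ⟩ := hS.repMat_pos_iff.1 h
  have hr : 0 < r := l.pos
  have hcard : 0 < #{l | β l = j} := card_pos.2 ⟨l, by simpa using hl⟩
  exact mul_pos (by positivity) <|
    sum_pos' (fun γ _ => mul_nonneg (hS i γ) (by positivity)) ⟨β, mem_univ β, by positivity⟩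

lemma TStochastic.meanMat_mulVec_le_logFT (hS : TStochastic S) (w : ι → ℝ) :
    meanMat S *ᵥ w ≤ logFT S w := by
  intro i
  have jensen : ∑ β, S i β * ∑ l, w (β l) ≤ Real.log (tapp S (fun j => Real.exp (w j)) i) := by
    simpa only [tapp, ← Real.exp_sum, smul_eq_mul, Real.log_exp] using
      strictConcaveOn_log_Ioi.concaveOn.le_map_sum
        (p := fun β : Fin r → ι => Real.exp (∑ l, w (β l)))
        (fun β _ => hS.1 i β) (hS.2 i) (fun β _ => Real.exp_pos _)
  rw [meanMat_mulVec, hS.logFT_apply]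
  gcongr

lemma TStochastic.osc_iterate_logFT_le (hS : TStochastic S) (hr : r ≠ 0) {q : ℕ} {ε : ℝ}
    (hε : ∀ i j, ε ≤ (meanMat S ^ q) i j) (w : ι → ℝ) :
    osc ((logFT S)^[q] w) ≤ (1 - ε) * osc w := by
  have hP := hS.meanMat_mem_rowStochastic hr
  have hup : ∀ b, MapsTo (logFT S) (Iic (const ι b)) (Iic (const ι b)) :=
    fun b w hw => hS.logFT_le_const hr hw
  exact osc_le_of_mulVec_le (pow_mem hP q) hε
    (pow_mulVec_le_iterate hP.1 hS.meanMat_mulVec_le_logFT q w)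
    fun b hw => (hup b).iterate q hw

end StochasticTensor

section PowerStep

variable {ι : Type*} [Fintype ι] {r : ℕ} {T : ι → (Fin r → ι) → ℝ} {v x : ι → ℝ}

/-- One step of the normalized power iteration. -/
noncomputable def powerStep (T : ι → (Fin r → ι) → ℝ) (x : ι → ℝ) : ι → ℝ :=
  fun i => FT T x i / ∑ j, FT T x j

/-- The tensor `T` rescaled so that the positive vector `v` becomes the all-ones vector and is
fixed: `tapp T (v * y) = tapp T v * tapp (rescale T v) y`. -/
noncomputable def rescale (T : ι → (Fin r → ι) → ℝ) (v : ι → ℝ) : ι → (Fin r → ι) → ℝ :=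
  fun i β => T i β * (∏ l, v (β l)) / tapp T v i

lemma TStrictlyNonneg.rescale_stochastic (hT : TStrictlyNonneg T) (hv : ∀ i, 0 < v i) :
    TStochastic (rescale T v) := by
  refine ⟨fun i β => div_nonneg (mul_nonneg (hT.1 i β) (prod_nonneg fun _ _ => (hv _).le))
    (hT.2 v hv i).le, fun i => ?_⟩
  simp only [rescale, ← sum_div]
  exact div_self (hT.2 v hv i).ne'

lemma TStrictlyNonneg.rescale_pos (hT : TStrictlyNonneg T) (hv : ∀ i, 0 < v i) {i : ι}
    {β : Fin r → ι} (h : 0 < T i β) : 0 < rescale T v i β :=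
  div_pos (mul_pos h (prod_pos fun _ _ => hv _)) (hT.2 v hv i)

lemma TStrictlyNonneg.FT_mul (hT : TStrictlyNonneg T) (hv : ∀ i, 0 < v i) {y : ι → ℝ}
    (hy : 0 ≤ y) : FT T (v * y) = FT T v * FT (rescale T v) y := by
  funext i
  have hvi := hT.2 v hv i
  have htapp : tapp T (v * y) i = tapp T v i * tapp (rescale T v) y i := by
    rw [tapp, tapp.eq_1 (rescale T v), mul_sum]
    refine sum_congr rfl fun β _ => ?_
    rw [rescale, Pi.mul_def, prod_mul_distrib]
    field_simp
  rw [Pi.mul_apply, FT, htapp,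
    Real.mul_rpow hvi.le ((hT.rescale_stochastic hv).1.tapp_nonneg hy i)]
  rfl

lemma TStrictlyNonneg.sum_FT_pos [Nonempty ι] (hT : TStrictlyNonneg T) (hx : ∀ i, 0 < x i) :
    0 < ∑ i, FT T x i :=
  sum_pos (fun i _ => hT.FT_pos hx i) univ_nonempty

lemma TStrictlyNonneg.powerStep_pos [Nonempty ι] (hT : TStrictlyNonneg T) (hx : ∀ i, 0 < x i)
    (i : ι) : 0 < powerStep T x i :=
  div_pos (hT.FT_pos hx i) (hT.sum_FT_pos hx)

lemma TStrictlyNonneg.iterate_powerStep_pos [Nonempty ι] (hT : TStrictlyNonneg T)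
    (hx : ∀ i, 0 < x i) (k : ℕ) : ∀ i, 0 < (powerStep T)^[k] x i :=
  Iterate.rec (fun y : ι → ℝ => ∀ i, 0 < y i) hx (fun _ => hT.powerStep_pos) k

lemma TStrictlyNonneg.sum_powerStep [Nonempty ι] (hT : TStrictlyNonneg T) (hx : ∀ i, 0 < x i) :
    ∑ i, powerStep T x i = 1 := by
  simp only [powerStep, ← sum_div]
  exact div_self (hT.sum_FT_pos hx).ne'

variable {lam : ℝ}

lemma TStrictlyNonneg.exists_logRatio_powerStep [Nonempty ι] (hT : TStrictlyNonneg T) (hr : r ≠ 0)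
    (hv : ∀ i, 0 < v i) (heig : ∀ i, tapp T v i = lam * v i ^ r) (hx : ∀ i, 0 < x i) :
    ∃ c, logRatio (powerStep T x) v = logFT (rescale T v) (logRatio x v) + const ι c := by
  have hlam := hT.eigenvalue_pos hv heig
  have hS := (hT.rescale_stochastic hv).strictlyNonneg
  have hsum := hT.sum_FT_pos hx
  set y : ι → ℝ := fun i => Real.exp (logRatio x v i)
  have hy_pos : ∀ i, 0 < y i := fun i => Real.exp_pos _
  have hxy : x = v * y := funext fun i => (mul_exp_logRatio (hx i) (hv i)).symm
  have hFT : ∀ i, FT T x i = lam ^ (r : ℝ)⁻¹ * v i * FT (rescale T v) y i := fun i => by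
    rw [hxy, hT.FT_mul hv fun i => (hy_pos i).le,
      FT_eq_smul_of_eigenpair hr hlam.le (fun i => (hv i).le) heig]
    rfl
  refine ⟨Real.log (lam ^ (r : ℝ)⁻¹ / ∑ j, FT T x j), funext fun i => ?_⟩
  have hvi := (hv i).ne'
  rw [Pi.add_apply, const_apply, logFT, ← Real.log_mul (hS.FT_pos hy_pos i).ne' (by positivity),
    logRatio, powerStep, hFT]
  field_simp

lemma TStrictlyNonneg.exists_logRatio_iterate_powerStep [Nonempty ι] (hT : TStrictlyNonneg T)
    (hr : r ≠ 0) (hv : ∀ i, 0 < v i) (heig : ∀ i, tapp T v i = lam * v i ^ r)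
    (hx : ∀ i, 0 < x i) (q : ℕ) :
    ∃ c, logRatio ((powerStep T)^[q] x) v =
      (logFT (rescale T v))^[q] (logRatio x v) + const ι c := by
  induction q generalizing x with
  | zero => exact ⟨0, by simp⟩
  | succ q ih =>
    obtain ⟨c, hc⟩ := hT.exists_logRatio_powerStep hr hv heig hx
    obtain ⟨c', hc'⟩ := ih (hT.powerStep_pos hx)
    have hcomm : Function.Commute (logFT (rescale T v)) (· + const ι c) := fun w =>
      (hT.rescale_stochastic hv).logFT_add_const hr w c
    refine ⟨c + c', ?_⟩
    rw [iterate_succ_apply, iterate_succ_apply, hc', hc, (hcomm.iterate_left q).eq, add_assoc]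
    rfl

variable [DecidableEq ι]

lemma TStrictlyNonneg.osc_logRatio_iterate_powerStep_le [Nonempty ι] (hT : TStrictlyNonneg T)
    (hr : r ≠ 0) (hv : ∀ i, 0 < v i) (heig : ∀ i, tapp T v i = lam * v i ^ r) {q : ℕ} {ε : ℝ}
    (hε : ∀ i j, ε ≤ (meanMat (rescale T v) ^ q) i j) (hx : ∀ i, 0 < x i) :
    osc (logRatio ((powerStep T)^[q] x) v) ≤ (1 - ε) * osc (logRatio x v) := by
  obtain ⟨c, hc⟩ := hT.exists_logRatio_iterate_powerStep hr hv heig hx q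
  rw [hc, osc_add_const]
  exact (hT.rescale_stochastic hv).osc_iterate_logFT_le hr hε _

lemma TStrictlyNonneg.matPrimitive_meanMat_rescale (hT : TStrictlyNonneg T)
    (hprim : MatPrimitive (repMat T)) (hv : ∀ i, 0 < v i) :
    MatPrimitive (meanMat (rescale T v)) := by
  have hS := (hT.rescale_stochastic hv).1
  refine hprim.of_support_subset hT.1.repMat_nonneg hS.meanMat_nonneg
    fun i j hij => hS.meanMat_pos_of_repMat_pos <| hS.repMat_pos_iff.2 ?_
  obtain ⟨β, hβj, hβ⟩ := hT.1.repMat_pos_iff.1 hij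
  exact ⟨β, hβj, hT.rescale_pos hv hβ⟩

end PowerStep

section Rate

lemma le_rpow_mul_div_of_antitone {D : ℕ → ℝ} (hD0 : 0 ≤ D 0) (hD : Antitone D) {θ : ℝ}
    (hθ : θ ∈ Ioo (0 : ℝ) 1) {p : ℕ} (hcontr : ∀ k, D (k + p) ≤ θ * D k) (k : ℕ) :
    D k ≤ θ ^ ((k : ℝ) / p) * D 0 / θ := by
  have hgeom : ∀ q, D (p * q) ≤ θ ^ q * D 0 := fun q => by
    induction q with
    | zero => simp
    | succ q ih =>
      calc D (p * (q + 1)) ≤ θ * D (p * q) := hcontr _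
        _ ≤ θ * (θ ^ q * D 0) := mul_le_mul_of_nonneg_left ih hθ.1.le
        _ = θ ^ (q + 1) * D 0 := by ring
  have hexp : (k : ℝ) / p - 1 ≤ (k / p : ℕ) := by
    rw [← Nat.floor_div_eq_div (K := ℝ)]
    exact (Nat.sub_one_lt_floor _).le
  have hpow : θ ^ (k / p) ≤ θ ^ ((k : ℝ) / p) / θ := by
    rw [← Real.rpow_natCast, ← Real.rpow_sub_one hθ.1.ne']
    exact Real.rpow_le_rpow_of_exponent_ge hθ.1 hθ.2.le hexp
  calc D k ≤ D (p * (k / p)) := hD (Nat.mul_div_le k p)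
    _ ≤ θ ^ (k / p) * D 0 := hgeom _
    _ ≤ θ ^ ((k : ℝ) / p) / θ * D 0 := mul_le_mul_of_nonneg_right hpow hD0
    _ = θ ^ ((k : ℝ) / p) * D 0 / θ := div_mul_eq_mul_div _ _ _

lemma tendsto_rpow_natCast_div_atTop {θ : ℝ} (hθ : θ ∈ Ioo (0 : ℝ) 1) {p : ℕ} (hp : 0 < p) :
    Filter.Tendsto (fun k : ℕ => θ ^ ((k : ℝ) / p)) Filter.atTop (𝓝 0) :=
  (tendsto_rpow_atTop_of_base_lt_one θ (by linarith [hθ.1]) hθ.2).comp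
    (tendsto_natCast_atTop_atTop.atTop_div_const (Nat.cast_pos.2 hp))

lemma TNonneg.exists_osc_logRatio_iterate_powerStep_le {ι : Type*} [Fintype ι] [DecidableEq ι]
    [Nonempty ι] {r : ℕ} {T : ι → (Fin r → ι) → ℝ} (hT : TNonneg T) (hr : r ≠ 0)
    (hprim : MatPrimitive (repMat T)) {lam : ℝ} {v : ι → ℝ} (hv : ∀ i, 0 < v i)
    (heig : ∀ i, tapp T v i = lam * v i ^ r) :
    ∃ θ ∈ Ioo (0 : ℝ) 1, ∃ p : ℕ, 0 < p ∧ ∀ x : ι → ℝ, (∀ i, 0 < x i) → ∀ k : ℕ,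
      osc (logRatio ((powerStep T)^[k] x) v) ≤
        θ ^ ((k : ℝ) / p) * osc (logRatio x v) / θ := by
  have hT' := hT.strictlyNonneg_of_matPrimitive hprim
  have hP := (hT'.rescale_stochastic hv).meanMat_mem_rowStochastic hr
  obtain ⟨p, hp, ε, hε, hεP⟩ := (hT'.matPrimitive_meanMat_rescale hprim hv).exists_le_pow_apply
  have hθ : 1 - ε ∈ Ioo (0 : ℝ) 1 := ⟨by linarith [hε.2], by linarith [hε.1]⟩
  refine ⟨1 - ε, hθ, p, hp, fun x hx => ?_⟩
  refine le_rpow_mul_div_of_antitone (D := fun k => osc (logRatio ((powerStep T)^[k] x) v))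
    (osc_nonneg _) (antitone_nat_of_succ_le fun k => ?_) hθ fun k => ?_
  · simpa [iterate_succ_apply'] using hT'.osc_logRatio_iterate_powerStep_le hr hv heig (q := 1)
      (ε := 0) (by simpa using hP.1) (hT'.iterate_powerStep_pos hx k)
  · rw [add_comm, iterate_add_apply]
    exact hT'.osc_logRatio_iterate_powerStep_le hr hv heig hεP (hT'.iterate_powerStep_pos hx k)

end Rate

theorem power_method_global_R_linear_convergence_general
    (m n : ℕ) (hm : 2 ≤ m) (hn : 0 < n)
    (T : Fin n → (Fin (m - 1) → Fin n) → ℝ) (hT : TNonneg T)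
    (hwp : MatPrimitive (repMat T))
    (lam : ℝ) (xs : Fin n → ℝ) (hxs : ∀ i, 0 < xs i)
    (heig : ∀ i, tapp T xs i = lam * xs i ^ (m - 1))
    (hsum : ∑ i, xs i = 1)
    (x : ℕ → Fin n → ℝ) (hx0 : ∀ i, 0 < x 0 i)
    (hiter : ∀ k, x (k + 1) = fun i =>
      (tapp T (x k) i) ^ (((m : ℝ) - 1)⁻¹) /
        ∑ j, (tapp T (x k) j) ^ (((m : ℝ) - 1)⁻¹)) :
    Filter.Tendsto x Filter.atTop (𝓝 xs) ∧
    ∃ θ : ℝ, θ ∈ Ioo (0 : ℝ) 1 ∧ ∃ M : ℕ, 0 < M ∧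
      ∀ k : ℕ, hilbertD hn (x k) xs ≤ θ ^ ((k : ℝ) / (M : ℝ)) * hilbertD hn (x 0) xs / θ := by
  have : Nonempty (Fin n) := ⟨⟨0, hn⟩⟩
  have hcast : (m : ℝ) - 1 = (m - 1 : ℕ) := (Nat.cast_pred (by omega)).symm
  have hT' := hT.strictlyNonneg_of_matPrimitive hwp
  have hstep : ∀ k, x (k + 1) = powerStep T (x k) := fun k => by rw [hiter, hcast]; rfl
  obtain ⟨x₀, rfl⟩ : ∃ x₀, x = fun k => (powerStep T)^[k] x₀ := ⟨x 0, funext fun k => by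
    induction k with
    | zero => rfl
    | succ k ih => rw [hstep, ih, iterate_succ_apply']⟩
  have hpos := hT'.iterate_powerStep_pos (x := x₀) hx0
  obtain ⟨θ, hθ, M, hM, hrate⟩ :=
    hT.exists_osc_logRatio_iterate_powerStep_le (by omega) hwp hxs heig
  refine ⟨?_, θ, hθ, M, hM, fun k => ?_⟩
  · have hosc := squeeze_zero (fun _ => osc_nonneg _) (hrate x₀ hx0) <| by
      simpa using ((tendsto_rpow_natCast_div_atTop hθ hM).mul_const _).div_const θ
    rw [← Filter.tendsto_add_atTop_iff_nat 1] at hosc ⊢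
    exact tendsto_of_tendsto_osc_logRatio (fun k => hpos (k + 1)) hxs
      (fun k => by rw [hsum, iterate_succ_apply', hT'.sum_powerStep (hpos k)]) hosc
  · rw [hilbertD_eq_osc_logRatio hn (hpos k) hxs, hilbertD_eq_osc_logRatio hn (hpos 0) hxs]
    exact hrate x₀ hx0 k

theorem power_method_global_R_linear_convergence
    (m n : ℕ) (hm : 2 ≤ m) (hn : 2 ≤ n)
    (T : Fin n → (Fin (m - 1) → Fin n) → ℝ) (hT : TNonneg T)
    (hwp : MatPrimitive (repMat T))
    (lam : ℝ) (xs : Fin n → ℝ) (hxs : ∀ i, 0 < xs i)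
    (heig : ∀ i, tapp T xs i = lam * xs i ^ (m - 1))
    (hsum : ∑ i, xs i = 1)
    (x : ℕ → Fin n → ℝ) (hx0 : ∀ i, 0 < x 0 i) (hx0sum : ∑ i, x 0 i = 1)
    (hiter : ∀ k, x (k + 1) = fun i =>
      (tapp T (x k) i) ^ (((m : ℝ) - 1)⁻¹) /
        ∑ j, (tapp T (x k) j) ^ (((m : ℝ) - 1)⁻¹)) :
    Filter.Tendsto x Filter.atTop (nhds xs) ∧
    ∃ θ : ℝ, θ ∈ Set.Ioo (0 : ℝ) 1 ∧ ∃ M : ℕ, 0 < M ∧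
      ∀ k : ℕ, 1 ≤ k →
        hilbertD (show 0 < n by omega) (x k) xs ≤
          θ ^ ((k : ℝ) / (M : ℝ)) * hilbertD (show 0 < n by omega) (x 0) xs / θ := by
  obtain ⟨hlim, θ, hθ, M, hM, hrate⟩ := power_method_global_R_linear_convergence_general
    m n hm (by omega) T hT hwp lam xs hxs heig hsum x hx0 hiter
  exact ⟨hlim, θ, hθ, M, hM, fun k _ => hrate k⟩
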